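/- Let E_n^sep denote expectation with respect to the uniform probability measure on the set SEP(n) of separable permutations of [n], and let A_n(σ) denote the length of the longest alternating subsequence of σ. Then lim_{n→∞} E_n^sep[A_n]/n = 2 − √2. -/

import Mathlib

open Finset Filter Real
open scoped Classical

/-- `σ` contains the pattern `τ` (a permutation of `Fin k` given as a function). -/
def ContainsPattern {n k : ℕ} (σ : Equiv.Perm (Fin n)) (τ : Fin k → Fin k) : Prop :=
  ∃ f : Fin k → Fin n, StrictMono f ∧ ∀ a b : Fin k, τ a < τ b ↔ σ (f a) < σ (f b)

/-- A permutation is separable iff it avoids the patterns 2413 and 3142. -/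
def Separable {n : ℕ} (σ : Equiv.Perm (Fin n)) : Prop :=
  ¬ ContainsPattern σ (![1, 3, 0, 2] : Fin 4 → Fin 4) ∧
  ¬ ContainsPattern σ (![2, 0, 3, 1] : Fin 4 → Fin 4)

/-- The set of separable permutations of `[n]`. -/
noncomputable def SEP (n : ℕ) : Finset (Equiv.Perm (Fin n)) :=
  Finset.univ.filter fun σ => Separable σ

/-- `IsAltSeq σ s l` : `l` is a strictly increasing list of indices along which the values of `σ`
alternate, starting with an ascent if `s = true` and starting with a descent if `s = false`. -/
def IsAltSeq {n : ℕ} (σ : Equiv.Perm (Fin n)) (s : Bool) (l : List (Fin n)) : Prop :=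
  l.Chain' (· < ·) ∧
  ∀ j : ℕ, ∀ hj : j + 1 < l.length,
    if decide (j % 2 = 0) = s then
      σ (l.get ⟨j, Nat.lt_of_succ_lt hj⟩) < σ (l.get ⟨j + 1, hj⟩)
    else
      σ (l.get ⟨j + 1, hj⟩) < σ (l.get ⟨j, Nat.lt_of_succ_lt hj⟩)

/-- The length of the longest alternating subsequence of `σ` of type `(s, e)`, where
`true` stands for ascent and `false` for descent.  An alternating subsequence starting with
an ascent ends with a descent iff its length is odd (and similarly in the other cases), so the
type is encoded by the parity constraint; a singleton counts as a subsequence of types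
`(+,-)` and `(-,+)` but not of types `(+,+)` and `(-,-)`. -/
noncomputable def altTypeLen {n : ℕ} (σ : Equiv.Perm (Fin n)) (s e : Bool) : ℕ :=
  sSup {k | ∃ l : List (Fin n), IsAltSeq σ s l ∧ l.length = k ∧
    k % 2 = (if s = e then 0 else 1)}

/-- The length `Aₙ(σ)` of the longest alternating subsequence of `σ`. -/
noncomputable def altLen {n : ℕ} (σ : Equiv.Perm (Fin n)) : ℕ :=
  sSup {k | ∃ l : List (Fin n), (IsAltSeq σ true l ∨ IsAltSeq σ false l) ∧
    l.length = k ∧ 1 ≤ k}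

/-- Expectation with respect to the uniform probability measure on `SEP n`. -/
noncomputable def sepExp (n : ℕ) (f : Equiv.Perm (Fin n) → ℝ) : ℝ :=
  (∑ σ ∈ SEP n, f σ) / (SEP n).card

/-- Variance with respect to the uniform probability measure on `SEP n`. -/
noncomputable def sepVar (n : ℕ) (f : Equiv.Perm (Fin n) → ℝ) : ℝ :=
  sepExp n (fun σ => (f σ - sepExp n f) ^ 2)

/-- `B₁^{+,n}(σ)`: the length of the first indecomposable block (0-indexed positions). -/
noncomputable def Bplus {n : ℕ} (σ : Equiv.Perm (Fin n)) : ℕ :=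
  sInf {j | 1 ≤ j ∧ ∀ i : Fin n, (i : ℕ) < j → (σ i : ℕ) < j}

/-- `B₁^{-,n}(σ)`: the length of the first skew indecomposable block (0-indexed positions). -/
noncomputable def Bminus {n : ℕ} (σ : Equiv.Perm (Fin n)) : ℕ :=
  sInf {j | 1 ≤ j ∧ ∀ i : Fin n, (i : ℕ) < j → n - j ≤ (σ i : ℕ)}

/-- Expectation over indecomposable separable permutations of `[n]`, i.e. the conditional
expectation under the uniform measure on `SEP n` given `{B₁^{+,n} = n}`. -/
noncomputable def indecExp (n : ℕ) (f : Equiv.Perm (Fin n) → ℝ) : ℝ :=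
  (∑ σ ∈ (SEP n).filter (fun σ => Bplus σ = n), f σ) /
    ((SEP n).filter (fun σ => Bplus σ = n)).card

/-!
The length of the longest alternating subsequence of a word is one more than the number of its
monotone runs.  Give an ascent the sign `1` and a descent the sign `-1`, and let `corr` be the sum
of the products of adjacent signs; since each product is `-1` exactly at a change of direction,
`2 Aₙ + corr = n + 2`, and it remains to find the mean of `corr` over separable permutations.

A separable permutation of size at least two is either a direct sum or, after complementing its
values, a direct sum, but not both, and a direct sum is determined by its first block and the
separable permutation that follows it.  Complementation preserves `corr` and reverses the signs of
the first and the last step, so these signs sum to zero over the separable permutations of a given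
size.  For the generating function `T` of the separable permutations and `N` of `corr` over them,
this gives `T = X + T ^ 2 + T X` and `N = -X (X T' - T)`.  Hence the mean of `corr` in size `n + 2`
is `-n tₙ₊₁ / tₙ₊₂`, where `tₙ` counts the separable permutations of size `n`.

The equation for `T` yields `(1 - 6 X + X ^ 2) T' = 1 + X - 3 T + T X`, a recurrence of order two
for `tₙ`.  The limiting characteristic polynomial `x ^ 2 - 6 x + 1` and `tₙ₊₁ ≥ tₙ` force
`tₙ₊₁ / tₙ → 3 + 2 √2`, so that `Aₙ / n` has mean tending to `(1 + (3 - 2 √2)) / 2 = 2 - √2`.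
-/

/-! ### Separable words -/

section SeparableWords

open scoped List

variable {α β : Type*}

/-- A word over a linear order is separable if it avoids the patterns `2413` (first clause) and
`3142` (second clause). -/
def SeparableWord [LinearOrder α] (l : List α) : Prop :=
  ∀ w x y z, [w, x, y, z] <+ l → ¬ (y < w ∧ w < z ∧ z < x) ∧ ¬ (x < z ∧ z < w ∧ w < y)

/-- A word splits by `r` if it is the concatenation of two nonempty words such that every letter of
the first is in relation `r` to every letter of the second.  Permutations that split by `<` are the
direct sums, those that split by `>` the skew sums. -/
def Splits (r : α → α → Prop) (l : List α) : Prop :=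
  ∃ a b, a ≠ [] ∧ b ≠ [] ∧ l = a ++ b ∧ ∀ x ∈ a, ∀ y ∈ b, r x y

lemma Splits.of_map {r : β → β → Prop} {f : α → β} {l : List α} (h : Splits r (l.map f)) :
    Splits (fun x y => r (f x) (f y)) l := by
  obtain ⟨_, _, ha, hb, hl, hab⟩ := h
  obtain ⟨a, b, rfl, rfl, rfl⟩ := List.map_eq_append_iff.1 hl
  exact ⟨a, b, by simpa using ha, by simpa using hb, rfl, by simpa using hab⟩

lemma Splits.mono {r s : α → α → Prop} {l : List α} (hl : Splits r l)
    (h : ∀ x ∈ l, ∀ y ∈ l, r x y → s x y) : Splits s l := by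
  obtain ⟨a, b, ha, hb, rfl, hab⟩ := hl
  exact ⟨a, b, ha, hb, rfl, fun x hx y hy =>
    h x (List.mem_append_left b hx) y (List.mem_append_right a hy) (hab x hx y hy)⟩

lemma not_splits_singleton (r : α → α → Prop) (x : α) : ¬ Splits r [x] := by
  rintro ⟨a, b, ha, hb, h, -⟩
  rcases List.append_eq_singleton_iff.1 h.symm with h | h
  exacts [ha h.1, hb h.2]

lemma Splits.ne_nil {r : α → α → Prop} {l : List α} (h : Splits r l) : l ≠ [] := by
  obtain ⟨a, b, ha, -, rfl, -⟩ := h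
  simp [ha]

lemma Splits.head_getLast {r : α → α → Prop} {l : List α} (h : Splits r l) (hl : l ≠ []) :
    r (l.head hl) (l.getLast hl) := by
  obtain ⟨a, b, ha, hb, rfl, hab⟩ := h
  rw [List.head_append_of_ne_nil ha, List.getLast_append_of_right_ne_nil a b hb]
  exact hab _ (List.head_mem ha) _ (List.getLast_mem hb)

/-- Take the shortest nonempty prefix that is in relation `r` to the rest of the word. -/
lemma exists_append_not_splits (r : α → α → Prop) {l : List α} (hl : l ≠ []) :
    ∃ a b, l = a ++ b ∧ a ≠ [] ∧ ¬ Splits r a ∧ ∀ x ∈ a, ∀ y ∈ b, r x y := by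
  have hex : ∃ k a b, a.length = k ∧ l = a ++ b ∧ a ≠ [] ∧ ∀ x ∈ a, ∀ y ∈ b, r x y :=
    ⟨_, l, [], rfl, by simp, hl, by simp⟩
  obtain ⟨a, b, hk, rfl, ha, hab⟩ := Nat.find_spec hex
  refine ⟨a, b, rfl, ha, ?_, hab⟩
  rintro ⟨c, d, hc, hd, rfl, hcd⟩
  have hlt : c.length < Nat.find hex := by
    rw [← hk, List.length_append]
    exact Nat.lt_add_of_pos_right (List.length_pos_of_ne_nil hd)
  refine Nat.find_min hex hlt ⟨c, d ++ b, rfl, List.append_assoc .., hc, fun x hx y hy => ?_⟩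
  rcases List.mem_append.1 hy with hy | hy
  exacts [hcd x hx y hy, hab x (List.mem_append_left d hx) y hy]

lemma append_inj_of_not_splits {r : α → α → Prop} {a b a' b' : List α} (h : a ++ b = a' ++ b')
    (ha : a ≠ []) (ha' : a' ≠ []) (hna : ¬ Splits r a) (hna' : ¬ Splits r a')
    (hab : ∀ x ∈ a, ∀ y ∈ b, r x y) (hab' : ∀ x ∈ a', ∀ y ∈ b', r x y) : a = a' ∧ b = b' := by
  rcases List.append_eq_append_iff.1 h with ⟨c, rfl, rfl⟩ | ⟨c, rfl, rfl⟩
  · have hc : c = [] := by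
      by_contra hc
      exact hna' ⟨a, c, ha, hc, rfl, fun x hx y hy => hab x hx y (List.mem_append_left b' hy)⟩
    simp [hc]
  · have hc : c = [] := by
      by_contra hc
      exact hna ⟨a', c, ha', hc, rfl, fun x hx y hy => hab' x hx y (List.mem_append_left b hy)⟩
    simp [hc]

variable [LinearOrder α] [LinearOrder β]

lemma Splits.not_splits_gt {l : List α} (h : Splits (· < ·) l) : ¬ Splits (· > ·) l :=
  fun h' => lt_asymm (h.head_getLast h.ne_nil) (h'.head_getLast h.ne_nil)

lemma SeparableWord.sublist {l m : List α} (h : SeparableWord m) (hl : l <+ m) : SeparableWord l :=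
  fun w x y z hs => h w x y z (hs.trans hl)

lemma SeparableWord.dual {l : List α} (h : SeparableWord l) : SeparableWord (α := αᵒᵈ) l :=
  fun w x y z hs =>
    ⟨fun ⟨h₁, h₂, h₃⟩ => (h w x y z hs).2 ⟨h₃, h₂, h₁⟩,
      fun ⟨h₁, h₂, h₃⟩ => (h w x y z hs).1 ⟨h₃, h₂, h₁⟩⟩

lemma SeparableWord.map {l : List α} (h : SeparableWord l) {f : α → β}
    (hf : StrictMonoOn f {x | x ∈ l}) : SeparableWord (l.map f) := by
  intro w x y z hs
  obtain ⟨s, hsl, hs⟩ := List.sublist_map_iff.1 hs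
  rw [eq_comm] at hs
  simp only [List.map_eq_cons_iff, List.map_eq_nil_iff] at hs
  obtain ⟨w, _, rfl, rfl, x, _, rfl, rfl, y, _, rfl, rfl, z, _, rfl, rfl, rfl⟩ := hs
  have hmem : ∀ u ∈ [w, x, y, z], u ∈ l := fun u hu => hsl.subset hu
  simp only [List.forall_mem_cons] at hmem
  obtain ⟨hw, hx, hy, hz, -⟩ := hmem
  rw [hf.lt_iff_lt hy hw, hf.lt_iff_lt hw hz, hf.lt_iff_lt hz hx, hf.lt_iff_lt hx hz,
    hf.lt_iff_lt hz hw, hf.lt_iff_lt hw hy]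
  exact h w x y z hsl

lemma SeparableWord.map_anti {l : List α} (h : SeparableWord l) {f : α → β}
    (hf : StrictAntiOn f {x | x ∈ l}) : SeparableWord (l.map f) :=
  (h.map (β := βᵒᵈ) hf).dual

lemma SeparableWord.append {l m : List α} (hl : SeparableWord l) (hm : SeparableWord m)
    (hlm : ∀ x ∈ l, ∀ y ∈ m, x < y) : SeparableWord (l ++ m) := by
  intro w x y z hs
  obtain ⟨u, v, huv, hu, hv⟩ := List.sublist_append_iff.1 hs
  have hlt : ∀ x ∈ u, ∀ y ∈ v, x < y := fun x hx y hy => hlm x (hu.subset hx) y (hv.subset hy)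
  rcases u with _ | ⟨_, _ | ⟨_, _ | ⟨_, _ | ⟨_, u⟩⟩⟩⟩
  · exact hm w x y z (huv ▸ hv)
  · grind
  · grind
  · grind
  · obtain ⟨rfl, rfl⟩ : u = [] ∧ v = [] := by simpa using congrArg List.length huv
    exact hl w x y z (huv ▸ by simpa using hu)

/-- The pattern occurrence that is ruled out consists of a letter of either part of `a`, a letter
of `b`, and `v`. -/
lemma SeparableWord.lt_or_gt_of_splits_gt {a b : List α} {v : α} (h : SeparableWord (a ++ b ++ [v]))
    (hv : v ∉ a) (ha : Splits (· > ·) a) (hb : b ≠ []) (hab : ∀ x ∈ a, ∀ y ∈ b, x < y) :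
    (∀ x ∈ a, x < v) ∨ ∀ x ∈ a, v < x := by
  obtain ⟨c, d, hc, hd, rfl, hcd⟩ := ha
  obtain ⟨y, hy⟩ := List.exists_mem_of_ne_nil b hb
  have hle : ∀ g ∈ c, ∀ e ∈ d, v < g → v < e := by
    intro g hg e he hvg
    by_contra! hev
    have hne : e ≠ v := by rintro rfl; simp [he] at hv
    refine (h g e y v ?_).2 ⟨lt_of_le_of_ne hev hne, hvg, hab g (by simp [hg]) y hy⟩
    simpa using ((List.singleton_sublist.2 hg).append (List.singleton_sublist.2 he)).append
      ((List.singleton_sublist.2 hy).append (List.Sublist.refl [v]))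
  obtain ⟨e, he⟩ := List.exists_mem_of_ne_nil d hd
  by_cases hgt : ∃ g ∈ c, v < g
  · obtain ⟨g, hg, hvg⟩ := hgt
    right
    intro x hx
    rcases List.mem_append.1 hx with hx | hx
    exacts [(hle g hg e he hvg).trans (hcd x hx e he), hle g hg x hx hvg]
  · push Not at hgt
    have hlt : ∀ g ∈ c, g < v := fun g hg =>
      lt_of_le_of_ne (hgt g hg) (by rintro rfl; simp [hg] at hv)
    obtain ⟨g, hg⟩ := List.exists_mem_of_ne_nil c hc
    left
    intro x hx
    rcases List.mem_append.1 hx with hx | hx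
    exacts [hlt x hx, (hcd g hg x hx).trans (hlt g hg)]

lemma SeparableWord.splits_concat {l : List α} {v : α} (h : SeparableWord (l ++ [v]))
    (hn : (l ++ [v]).Nodup) (hs : Splits (· < ·) l)
    (ih : ∀ a, a <+ l → 2 ≤ a.length → Splits (· < ·) a ∨ Splits (· > ·) a) :
    Splits (· < ·) (l ++ [v]) ∨ Splits (· > ·) (l ++ [v]) := by
  obtain ⟨a, b, rfl, ha, hna, hab⟩ := exists_append_not_splits (· < ·) hs.ne_nil
  have hb : b ≠ [] := by
    rintro rfl
    exact hna (by simpa using hs)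
  have hv : v ∉ a := fun hv =>
    List.disjoint_of_nodup_append hn (List.mem_append_left b hv) (List.mem_singleton_self v)
  have hav : (∀ x ∈ a, x < v) ∨ ∀ x ∈ a, v < x := by
    rcases Nat.eq_or_lt_of_le (List.length_pos_of_ne_nil ha) with h₁ | h₂
    · obtain ⟨x, rfl⟩ := List.length_eq_one_iff.1 h₁.symm
      simpa [eq_comm] using hv
    · exact h.lt_or_gt_of_splits_gt hv
        ((ih a (List.sublist_append_left a b) h₂).resolve_left hna) hb hab
  rcases hav with hlt | hgt
  · refine Or.inl ⟨a, b ++ [v], ha, by simp, by simp, fun x hx y hy => ?_⟩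
    rcases List.mem_append.1 hy with hy | hy
    exacts [hab x hx y hy, List.mem_singleton.1 hy ▸ hlt x hx]
  · obtain ⟨u, hu⟩ := List.exists_mem_of_ne_nil a ha
    refine Or.inr ⟨a ++ b, [v], by simp [ha], by simp, rfl, fun x hx y hy => ?_⟩
    rw [List.mem_singleton.1 hy]
    rcases List.mem_append.1 hx with hx | hx
    exacts [hgt x hx, (hgt u hu).trans (hab u hu x hx)]

theorem SeparableWord.splits_lt_or_splits_gt {l : List α} (h : SeparableWord l) (hn : l.Nodup)
    (h₂ : 2 ≤ l.length) : Splits (· < ·) l ∨ Splits (· > ·) l := by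
  induction hk : l.length using Nat.strong_induction_on generalizing l with
  | _ k ih =>
    subst hk
    rcases List.eq_nil_or_concat' l with rfl | ⟨m, v, rfl⟩
    · simp at h₂
    have ih' : ∀ a, a <+ m → 2 ≤ a.length → Splits (· < ·) a ∨ Splits (· > ·) a := by
      intro a ha h₂
      have hsub : a <+ m ++ [v] := ha.trans (List.sublist_append_left m [v])
      exact ih a.length (by simpa [Nat.lt_succ_iff] using ha.length_le) (h.sublist hsub)
        (hn.sublist hsub) h₂ rfl
    match m with
    | [] => simp at h₂
    | [u] =>
      have huv : u ≠ v := by simpa using hn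
      exact huv.lt_or_gt.imp (fun h => ⟨[u], [v], by simpa using h⟩)
        (fun h => ⟨[u], [v], by simpa using h⟩)
    | u :: u' :: m =>
      rcases ih' _ (List.Sublist.refl _) (by simp) with hs | hs
      · exact h.splits_concat hn hs ih'
      · exact (h.dual.splits_concat hn hs fun a ha h₂ => (ih' a ha h₂).symm).symm

end SeparableWords

/-! ### Alternating subsequences and runs -/

section Ascents

open scoped List

variable {α β : Type*} [LinearOrder α] [LinearOrder β]

/-- The word of steps of a word: the entry at position `i` tells whether the letters `i` and `i + 1`
form an ascent. -/
def ascents : List α → List Bool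
  | [] => []
  | [_] => []
  | a :: b :: l => decide (a < b) :: ascents (b :: l)

lemma length_ascents (l : List α) : (ascents l).length = l.length - 1 := by
  induction l using ascents.induct <;> simp_all [ascents]

lemma getElem_ascents (l : List α) {j : ℕ} (hj : j + 1 < l.length) :
    (ascents l)[j]'(by rw [length_ascents]; omega) = decide (l[j] < l[j + 1]) := by
  induction l using ascents.induct generalizing j with
  | case1 | case2 => simp at hj
  | case3 a b l ih =>
    cases j with
    | zero => rfl
    | succ j => exact ih (by simpa using hj)

lemma ascents_append {l m : List α} (hl : l ≠ []) (hm : m ≠ []) (h : ∀ x ∈ l, ∀ y ∈ m, x < y) :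
    ascents (l ++ m) = ascents l ++ true :: ascents m := by
  induction l using ascents.induct with
  | case1 => exact absurd rfl hl
  | case2 a =>
    obtain ⟨b, m, rfl⟩ := List.exists_cons_of_ne_nil hm
    simp [ascents, h a (by simp) b (by simp)]
  | case3 a b l ih =>
    simpa [ascents] using ih (by simp) fun x hx => h x (List.mem_cons_of_mem a hx)

lemma ascents_map {f : α → β} {l : List α} (hf : StrictMonoOn f {x | x ∈ l}) :
    ascents (l.map f) = ascents l := by
  induction l using ascents.induct with
  | case1 | case2 => rfl
  | case3 a b l ih =>
    have hab : f a < f b ↔ a < b := hf.lt_iff_lt (by simp) (by simp)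
    simpa [ascents, hab] using ih (hf.mono fun x hx => List.mem_cons_of_mem a hx)

lemma ascents_map_anti {f : α → β} {l : List α} (hl : l.Nodup)
    (hf : StrictAntiOn f {x | x ∈ l}) : ascents (l.map f) = (ascents l).map (!·) := by
  induction l using ascents.induct with
  | case1 | case2 => rfl
  | case3 a b l ih =>
    have hne : a ≠ b := by rintro rfl; simp at hl
    have hab : decide (f a < f b) = !decide (a < b) := by
      rw [← decide_not, decide_eq_decide, hf.lt_iff_gt (by simp) (by simp), not_lt,
        hne.symm.le_iff_lt]
    simpa only [ascents, List.map_cons, hab, List.cons.injEq, true_and] using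
      ih hl.of_cons (hf.mono fun x hx => List.mem_cons_of_mem a hx)

lemma isChain_ne_iff_exists_getElem_eq (u : List Bool) :
    u.IsChain (· ≠ ·) ↔ ∃ s, ∀ j (hj : j < u.length), u[j] = (decide (j % 2 = 0) == s) := by
  have hparity (j : ℕ) : decide ((j + 1) % 2 = 0) = !decide (j % 2 = 0) := by
    rw [← decide_not, decide_eq_decide]
    omega
  rw [List.isChain_iff_getElem]
  constructor
  · intro h
    refine ⟨u.headD true, fun j hj => ?_⟩
    induction j with
    | zero => simp [List.headD_eq_head?_getD, List.head?_eq_getElem?, hj]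
    | succ j ih =>
      rw [← Bool.not_eq.2 (h j hj), ih (by omega), hparity]
      cases decide (j % 2 = 0) <;> simp
  · rintro ⟨s, hs⟩ j hj
    rw [hs, hs, hparity]
    cases s <;> simp

/-- Omitting a letter merges two steps into one, which agrees with at least one of them. -/
lemma ascents_cons_sublist_cons_cons (a b : α) (l : List α) :
    ascents (a :: l) <+ ascents (a :: b :: l) := by
  cases l with
  | nil => simp [ascents]
  | cons c l =>
    by_cases h : decide (a < c) = decide (a < b)
    · simp [ascents, h]
    · have h' : decide (a < c) = decide (b < c) := by grind
      simp [ascents, h']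

lemma ascents_cons_sublist_cons (a : α) {l m : List α} (h : l <+ m) :
    ascents (a :: l) <+ ascents (a :: m) := by
  induction h generalizing a with
  | slnil => exact List.Sublist.refl _
  | cons b _ ih => exact (ih a).trans (ascents_cons_sublist_cons_cons a b _)
  | cons_cons b _ ih => exact (ih b).cons_cons _

lemma ascents_sublist {l m : List α} (h : l <+ m) : ascents l <+ ascents m := by
  induction h with
  | slnil => exact List.Sublist.refl _
  | @cons _ m a _ ih =>
    refine ih.trans ?_
    cases m <;> simp [ascents]
  | cons_cons a h _ => exact ascents_cons_sublist_cons a h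

lemma exists_sublist_ascents_eq_destutter' (a b : α) (l : List α) :
    ∃ m, a :: m <+ a :: b :: l ∧
      ascents (a :: m) = (ascents (b :: l)).destutter' (· ≠ ·) (decide (a < b)) := by
  induction l generalizing a b with
  | nil => exact ⟨[b], List.Sublist.refl _, rfl⟩
  | cons c l ih =>
    by_cases h : decide (a < b) = decide (b < c)
    · have hac : decide (a < b) = decide (a < c) := by grind
      obtain ⟨m, hm, hasc⟩ := ih a c
      refine ⟨m, hm.trans ((List.sublist_cons_self b _).cons_cons a), ?_⟩
      rw [ascents, List.destutter'_cons_neg _ (not_not.2 h), hasc, hac]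
    · obtain ⟨m, hm, hasc⟩ := ih b c
      refine ⟨b :: m, hm.cons_cons a, ?_⟩
      rw [ascents, ascents, List.destutter'_cons_pos _ h, hasc]

lemma exists_sublist_ascents_eq_destutter {l : List α} (hl : l ≠ []) :
    ∃ m, m ≠ [] ∧ m <+ l ∧ ascents m = (ascents l).destutter (· ≠ ·) := by
  match l with
  | [a] => exact ⟨[a], by simp, List.Sublist.refl _, rfl⟩
  | a :: b :: l =>
    obtain ⟨m, hm, h⟩ := exists_sublist_ascents_eq_destutter' a b l
    exact ⟨a :: m, by simp, hm, h⟩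

/-- The destuttered word of steps has one entry for each maximal monotone run of `l`. -/
theorem isGreatest_length_alternating {l : List α} (hl : l ≠ []) :
    IsGreatest {k | ∃ m, m <+ l ∧ (ascents m).IsChain (· ≠ ·) ∧ m.length = k}
      (((ascents l).destutter (· ≠ ·)).length + 1) := by
  constructor
  · obtain ⟨m, hm, hml, h⟩ := exists_sublist_ascents_eq_destutter hl
    refine ⟨m, hml, h ▸ List.isChain_destutter _ _, ?_⟩
    have := List.length_pos_of_ne_nil hm
    rw [← h, length_ascents]
    omega
  · rintro _ ⟨m, hml, hm, rfl⟩
    have := hm.length_le_length_destutter_ne (ascents_sublist hml)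
    rw [length_ascents] at this
    omega

end Ascents

section Spins

/-- The sum of the products of adjacent entries of a list. -/
def adjProdSum {R : Type*} [Add R] [Mul R] [Zero R] : List R → R
  | [] => 0
  | [_] => 0
  | a :: b :: l => a * b + adjProdSum (b :: l)

lemma adjProdSum_append_cons {R : Type*} [NonUnitalNonAssocSemiring R] (u : List R) (x : R)
    (v : List R) :
    adjProdSum (u ++ x :: v) =
      adjProdSum u + u.getLastD 0 * x + x * v.headD 0 + adjProdSum v := by
  induction u using adjProdSum.induct with
  | case1 => cases v <;> simp [adjProdSum]
  | case2 a => cases v <;> simp [adjProdSum, add_assoc]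
  | case3 a b u ih =>
    simp only [List.cons_append, adjProdSum, List.getLastD_cons] at ih ⊢
    rw [ih]
    simp only [add_assoc]

lemma adjProdSum_map_neg {R : Type*} [NonUnitalNonAssocRing R] (u : List R) :
    adjProdSum (u.map (-·)) = adjProdSum u := by
  induction u using adjProdSum.induct with
  | case1 | case2 => rfl
  | case3 a b u ih => simpa [adjProdSum] using ih

/-- The sign of a step: `1` for an ascent, `-1` for a descent. -/
def spin (e : Bool) : ℤ := if e then 1 else -1

lemma spin_not (e : Bool) : spin (!e) = -spin e := by
  cases e <;> rfl

lemma two_mul_length_destutter'_add_adjProdSum (e : Bool) (u : List Bool) :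
    2 * ((u.destutter' (· ≠ ·) e).length : ℤ) + adjProdSum ((e :: u).map spin) =
      u.length + 2 := by
  induction u generalizing e with
  | nil => rfl
  | cons e' u ih =>
    have ih := ih e'
    by_cases h : e = e'
    · subst h
      have he : spin e * spin e = 1 := by cases e <;> rfl
      rw [List.destutter'_cons_neg _ (not_not.2 rfl)]
      simp only [List.map_cons, adjProdSum, List.length_cons, he] at ih ⊢
      push_cast
      linarith
    · have he : spin e * spin e' = -1 := by cases e <;> cases e' <;> simp_all [spin]
      rw [List.destutter'_cons_pos _ h]
      simp only [List.map_cons, adjProdSum, List.length_cons, he] at ih ⊢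
      push_cast
      linarith

variable {α β : Type*} [LinearOrder α] [LinearOrder β]

/-- The steps of a word as a list of signs. -/
def spins (l : List α) : List ℤ := (ascents l).map spin

/-- The sign of the first step of a word, or `0` if there is none. -/
def firstSpin (l : List α) : ℤ := (spins l).headD 0

/-- The sign of the last step of a word, or `0` if there is none. -/
def lastSpin (l : List α) : ℤ := (spins l).getLastD 0

/-- The number of interior letters of a word at which it keeps its direction minus the number of
those at which it changes direction. -/
def corr (l : List α) : ℤ := adjProdSum (spins l)

lemma spins_map {f : α → β} {l : List α} (hf : StrictMonoOn f {x | x ∈ l}) :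
    spins (l.map f) = spins l := by
  rw [spins, ascents_map hf, spins]

lemma spins_map_anti {f : α → β} {l : List α} (hl : l.Nodup)
    (hf : StrictAntiOn f {x | x ∈ l}) : spins (l.map f) = (spins l).map (-·) := by
  simp only [spins, ascents_map_anti hl hf, List.map_map, Function.comp_def, spin_not]

lemma corr_map_anti {f : α → β} {l : List α} (hl : l.Nodup) (hf : StrictAntiOn f {x | x ∈ l}) :
    corr (l.map f) = corr l := by
  rw [corr, spins_map_anti hl hf, adjProdSum_map_neg, corr]

lemma firstSpin_map_anti {f : α → β} {l : List α} (hl : l.Nodup)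
    (hf : StrictAntiOn f {x | x ∈ l}) : firstSpin (l.map f) = -firstSpin l := by
  simpa only [firstSpin, spins_map_anti hl hf, neg_zero] using
    List.headD_map (f := (-· : ℤ → ℤ)) (l := spins l) (a := 0)

lemma lastSpin_map_anti {f : α → β} {l : List α} (hl : l.Nodup)
    (hf : StrictAntiOn f {x | x ∈ l}) : lastSpin (l.map f) = -lastSpin l := by
  simpa only [lastSpin, spins_map_anti hl hf, neg_zero] using
    List.getLastD_map (f := (-· : ℤ → ℤ)) (l := spins l) (a := 0)

lemma corr_append {l m : List α} (hl : l ≠ []) (hm : m ≠ []) (h : ∀ x ∈ l, ∀ y ∈ m, x < y) :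
    corr (l ++ m) = corr l + lastSpin l + firstSpin m + corr m := by
  simp only [corr, spins, ascents_append hl hm h, List.map_append, List.map_cons,
    adjProdSum_append_cons, lastSpin, firstSpin]
  simp [spin]

lemma lastSpin_append {l m : List α} (hl : l ≠ []) (hm : m ≠ []) (h : ∀ x ∈ l, ∀ y ∈ m, x < y) :
    lastSpin (l ++ m) = (if m.length = 1 then 1 else 0) + lastSpin m := by
  rw [lastSpin, spins, ascents_append hl hm h, List.map_append, List.map_cons, lastSpin, spins]
  match m with
  | [b] => simp [ascents, spin]
  | b :: b' :: m => simp [ascents, List.getLast?_cons]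

theorem two_mul_length_destutter_ascents_add_corr {l : List α} (h : 2 ≤ l.length) :
    2 * (((ascents l).destutter (· ≠ ·)).length : ℤ) + corr l = l.length := by
  match l with
  | a :: b :: l =>
    have := two_mul_length_destutter'_add_adjProdSum (decide (a < b)) (ascents (b :: l))
    rw [length_ascents] at this
    rw [ascents, List.destutter_cons', corr, spins, ascents, this]
    push_cast [List.length_cons, Nat.add_sub_cancel]
    ring

end Spins

/-! ### Words of permutations -/

section Word

open scoped List

variable {n : ℕ}

/-- The one-line notation of a permutation, with letters `0, …, n - 1`. -/
def word (σ : Equiv.Perm (Fin n)) : List ℕ :=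
  (List.finRange n).map fun i => (σ i : ℕ)

lemma length_word (σ : Equiv.Perm (Fin n)) : (word σ).length = n := by
  simp [word]

lemma word_injective : Function.Injective (word : Equiv.Perm (Fin n) → List ℕ) := by
  intro σ τ h
  ext i
  simpa using List.map_inj_left.1 h i (List.mem_finRange i)

lemma word_perm_range (σ : Equiv.Perm (Fin n)) : word σ ~ List.range n := by
  refine (List.perm_ext_iff_of_nodup ?_ List.nodup_range).2 fun x => ?_
  · exact (List.nodup_finRange n).map (Fin.val_injective.comp σ.injective)
  · simp only [word, List.mem_map, List.mem_finRange, true_and, List.mem_range]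
    exact ⟨fun ⟨i, hi⟩ => hi ▸ (σ i).isLt, fun hx => ⟨σ.symm ⟨x, hx⟩, by simp⟩⟩

lemma exists_word_eq {l : List ℕ} (h : l ~ List.range n) :
    ∃ σ : Equiv.Perm (Fin n), word σ = l := by
  have hlen : l.length = n := by simpa using h.length_eq
  have hlt (i : Fin n) : l[i] < n := List.mem_range.1 (h.subset (List.getElem_mem _))
  have hinj : Function.Injective fun i : Fin n => (⟨l[i], hlt i⟩ : Fin n) := by
    intro i j hij
    have := (h.nodup_iff.2 List.nodup_range).getElem_inj_iff.1 (Fin.mk.inj hij)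
    exact Fin.ext this
  refine ⟨Equiv.ofBijective _ (Finite.injective_iff_bijective.1 hinj), ?_⟩
  exact List.ext_getElem (by simp [word, hlen]) (by simp [word])

lemma sublist_finRange_iff {s : List (Fin n)} : s <+ List.finRange n ↔ s.IsChain (· < ·) := by
  refine ⟨fun h => ((List.pairwise_lt_finRange n).sublist h).isChain, fun h => ?_⟩
  have hs : s.Pairwise (· < ·) := List.isChain_iff_pairwise.1 h
  exact List.sublist_of_subperm_of_pairwise
    (hs.nodup.subperm fun i _ => List.mem_finRange i) hs (List.pairwise_lt_finRange n)

lemma sublist_word_iff {σ : Equiv.Perm (Fin n)} {m : List ℕ} :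
    m <+ word σ ↔ ∃ s : List (Fin n), s.IsChain (· < ·) ∧ m = s.map fun i => (σ i : ℕ) := by
  simp only [word, List.sublist_map_iff, sublist_finRange_iff]

lemma isAltSeq_iff {σ : Equiv.Perm (Fin n)} {s : Bool} {l : List (Fin n)} :
    IsAltSeq σ s l ↔ l.IsChain (· < ·) ∧
      ∀ j (hj : j < (ascents (l.map fun i => (σ i : ℕ))).length),
        (ascents (l.map fun i => (σ i : ℕ)))[j] = (decide (j % 2 = 0) == s) := by
  refine and_congr_right fun hl => ?_
  have hnodup : l.Nodup := (List.isChain_iff_pairwise.1 hl).nodup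
  have hne (j : ℕ) (hj : j + 1 < l.length) : σ l[j] ≠ σ l[j + 1] := by
    simp [hnodup.getElem_inj_iff]
  have hlen : (ascents (l.map fun i => (σ i : ℕ))).length = l.length - 1 := by
    simp [length_ascents]
  simp only [hlen, Nat.lt_sub_iff_add_lt]
  refine forall₂_congr fun j hj => ?_
  rw [getElem_ascents _ (by simpa using hj)]
  have := hne j hj
  simp only [List.get_eq_getElem, List.getElem_map, Fin.val_fin_lt]
  split_ifs with h
  · simp [h]
  · have h' : (decide (j % 2 = 0) == s) = false := by simpa using h
    rw [h', decide_eq_false_iff_not, not_lt, this.symm.le_iff_lt]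

lemma isAltSeq_true_or_false_iff {σ : Equiv.Perm (Fin n)} {l : List (Fin n)} :
    (IsAltSeq σ true l ∨ IsAltSeq σ false l) ↔
      l.IsChain (· < ·) ∧ (ascents (l.map fun i => (σ i : ℕ))).IsChain (· ≠ ·) := by
  rw [isAltSeq_iff, isAltSeq_iff, ← and_or_left, isChain_ne_iff_exists_getElem_eq, Bool.exists_bool,
    or_comm]

theorem altLen_eq (hn : n ≠ 0) (σ : Equiv.Perm (Fin n)) :
    altLen σ = ((ascents (word σ)).destutter (· ≠ ·)).length + 1 := by
  have hne : word σ ≠ [] := List.ne_nil_of_length_pos (by rw [length_word]; omega)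
  have hset : {k | ∃ l : List (Fin n), (IsAltSeq σ true l ∨ IsAltSeq σ false l) ∧
      l.length = k ∧ 1 ≤ k} =
      {k | ∃ m, m <+ word σ ∧ (ascents m).IsChain (· ≠ ·) ∧ m.length = k} ∩ Set.Ici 1 := by
    ext k
    simp only [isAltSeq_true_or_false_iff, sublist_word_iff]
    constructor
    · rintro ⟨l, ⟨hl, halt⟩, hk, h1⟩
      exact ⟨⟨_, ⟨l, hl, rfl⟩, halt, by simpa using hk⟩, h1⟩
    · rintro ⟨⟨_, ⟨l, hl, rfl⟩, halt, hk⟩, h1⟩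
      exact ⟨l, ⟨hl, halt⟩, by simpa using hk, h1⟩
  obtain ⟨hmem, hub⟩ := isGreatest_length_alternating hne
  rw [altLen, hset]
  exact IsGreatest.csSup_eq ⟨⟨hmem, Nat.succ_pos _⟩, fun k hk => hub hk.1⟩

theorem two_mul_altLen_add_corr (hn : 2 ≤ n) (σ : Equiv.Perm (Fin n)) :
    2 * (altLen σ : ℤ) + corr (word σ) = n + 2 := by
  have := two_mul_length_destutter_ascents_add_corr (l := word σ) (by rwa [length_word])
  rw [length_word] at this
  rw [altLen_eq (by omega), ← this]
  push_cast
  ring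

/-- `ρ` is the inverse of the pattern, so that it lists the positions by increasing value. -/
lemma containsPattern_iff {k : ℕ} {σ : Equiv.Perm (Fin n)} {τ ρ : Fin k → Fin k}
    (h₁ : Function.LeftInverse ρ τ) (h₂ : Function.RightInverse ρ τ) :
    ContainsPattern σ τ ↔ ∃ f : Fin k → Fin n, StrictMono f ∧ StrictMono fun a => σ (f (ρ a)) := by
  refine exists_congr fun f => and_congr_right fun _ => ⟨fun h a b hab => ?_, fun h a b => ?_⟩
  · exact (h _ _).1 (by rwa [h₂, h₂])
  · simpa [h₁ a, h₁ b] using (h.lt_iff_lt (a := τ a) (b := τ b)).symm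

lemma exists_four_sublist_word_iff {σ : Equiv.Perm (Fin n)} {P : ℕ → ℕ → ℕ → ℕ → Prop} :
    (∃ w x y z, [w, x, y, z] <+ word σ ∧ P w x y z) ↔
      ∃ f : Fin 4 → Fin n, StrictMono f ∧ P (σ (f 0)) (σ (f 1)) (σ (f 2)) (σ (f 3)) := by
  simp only [sublist_word_iff, Fin.strictMono_iff_lt_succ, Fin.forall_fin_succ]
  constructor
  · rintro ⟨w, x, y, z, ⟨s, hs, h⟩, hP⟩
    rw [eq_comm] at h
    simp only [List.map_eq_cons_iff, List.map_eq_nil_iff] at h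
    obtain ⟨i, _, rfl, rfl, j, _, rfl, rfl, k, _, rfl, rfl, l, _, rfl, rfl, rfl⟩ := h
    exact ⟨![i, j, k, l], by simpa using hs, hP⟩
  · rintro ⟨f, hf, hP⟩
    exact ⟨_, _, _, _, ⟨[f 0, f 1, f 2, f 3], by simpa using hf, rfl⟩, hP⟩

lemma separable_iff {σ : Equiv.Perm (Fin n)} : Separable σ ↔ SeparableWord (word σ) := by
  have h2413 : ContainsPattern σ ![1, 3, 0, 2] ↔
      ∃ w x y z, [w, x, y, z] <+ word σ ∧ y < w ∧ w < z ∧ z < x := by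
    rw [containsPattern_iff (ρ := ![2, 0, 3, 1]) (by decide) (by decide),
      exists_four_sublist_word_iff (P := fun w x y z => y < w ∧ w < z ∧ z < x)]
    simp [Fin.strictMono_iff_lt_succ (α := Fin n) (f := fun _ => σ _), Fin.forall_fin_succ]
  have h3142 : ContainsPattern σ ![2, 0, 3, 1] ↔
      ∃ w x y z, [w, x, y, z] <+ word σ ∧ x < z ∧ z < w ∧ w < y := by
    rw [containsPattern_iff (ρ := ![1, 3, 0, 2]) (by decide) (by decide),
      exists_four_sublist_word_iff (P := fun w x y z => x < z ∧ z < w ∧ w < y)]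
    simp [Fin.strictMono_iff_lt_succ (α := Fin n) (f := fun _ => σ _), Fin.forall_fin_succ]
  rw [Separable, h2413, h3142]
  simp only [SeparableWord, not_exists, not_and, forall_and]

end Word

/-! ### Direct sums and complements -/

section Decomposition

open scoped List

variable {n i j : ℕ} {l a b : List ℕ}

/-- The nonempty words of separable permutations of `{0, …, n - 1}`.  Excluding the empty word
makes the decomposition of a word into its first block and the rest unambiguous. -/
noncomputable def sepWords (n : ℕ) : Finset (List ℕ) :=
  {l ∈ (List.range n).permutations.toFinset | l ≠ [] ∧ SeparableWord l}

/-- The nonempty words of those separable permutations of `{0, …, n - 1}` that are not direct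
sums. -/
noncomputable def indecWords (n : ℕ) : Finset (List ℕ) :=
  {l ∈ sepWords n | ¬ Splits (· < ·) l}

lemma mem_sepWords : l ∈ sepWords n ↔ l ~ List.range n ∧ l ≠ [] ∧ SeparableWord l := by
  simp [sepWords]

lemma mem_indecWords : l ∈ indecWords n ↔ l ∈ sepWords n ∧ ¬ Splits (· < ·) l :=
  Finset.mem_filter

lemma length_of_mem_sepWords (hl : l ∈ sepWords n) : l.length = n := by
  simpa using (mem_sepWords.1 hl).1.length_eq

lemma nodup_of_mem_sepWords (hl : l ∈ sepWords n) : l.Nodup :=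
  (mem_sepWords.1 hl).1.nodup_iff.2 List.nodup_range

lemma lt_of_mem_sepWords (hl : l ∈ sepWords n) {x : ℕ} (hx : x ∈ l) : x < n :=
  List.mem_range.1 ((mem_sepWords.1 hl).1.subset hx)

lemma sepWords_zero : sepWords 0 = ∅ :=
  Finset.eq_empty_of_forall_notMem fun _ hl =>
    (mem_sepWords.1 hl).2.1 (List.length_eq_zero_iff.1 (length_of_mem_sepWords hl))

lemma sepWords_one : sepWords 1 = {[0]} := by
  ext l
  rw [mem_sepWords, Finset.mem_singleton, List.range_one, List.perm_singleton]
  refine ⟨And.left, ?_⟩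
  rintro rfl
  exact ⟨rfl, by simp, fun w x y z h => by simpa using h.length_le⟩

lemma indecWords_one : indecWords 1 = {[0]} := by
  rw [indecWords, sepWords_one, Finset.filter_singleton, if_pos (not_splits_singleton _ _)]

theorem sum_sepWords_eq_sum_SEP {M : Type*} [AddCommMonoid M] (hn : n ≠ 0) (f : List ℕ → M) :
    ∑ l ∈ sepWords n, f l = ∑ σ ∈ SEP n, f (word σ) := by
  symm
  refine Finset.sum_nbij word (fun σ hσ => ?_) word_injective.injOn (fun l hl => ?_)
    fun _ _ => rfl
  · refine mem_sepWords.2 ⟨word_perm_range σ, ?_, separable_iff.1 (Finset.mem_filter.1 hσ).2⟩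
    exact List.ne_nil_of_length_pos (by rw [length_word]; omega)
  · obtain ⟨hperm, -, hsep⟩ := mem_sepWords.1 hl
    obtain ⟨σ, rfl⟩ := exists_word_eq hperm
    exact ⟨σ, Finset.mem_filter.2 ⟨Finset.mem_univ σ, separable_iff.2 hsep⟩, rfl⟩

/-- The direct sum of two words of permutations. -/
def directSum (a b : List ℕ) : List ℕ := a ++ b.map (a.length + ·)

lemma lt_of_mem_map_length_add (ha : a ∈ sepWords i) :
    ∀ x ∈ a, ∀ y ∈ b.map (a.length + ·), x < y := by
  rw [length_of_mem_sepWords ha]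
  intro x hx y hy
  obtain ⟨z, -, rfl⟩ := List.mem_map.1 hy
  exact (lt_of_mem_sepWords ha hx).trans_le (Nat.le_add_right i z)

lemma directSum_mem_sepWords (ha : a ∈ sepWords i) (hb : b ∈ sepWords j) :
    directSum a b ∈ sepWords (i + j) := by
  have hi := length_of_mem_sepWords ha
  have hlt := lt_of_mem_map_length_add ha (b := b)
  obtain ⟨hpa, hna, hsa⟩ := mem_sepWords.1 ha
  obtain ⟨hpb, -, hsb⟩ := mem_sepWords.1 hb
  refine mem_sepWords.2 ⟨?_, by simp [directSum, hna],
    hsa.append (hsb.map fun x _ y _ h => Nat.add_lt_add_left h _) hlt⟩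
  rw [directSum, hi, List.range_add]
  exact hpa.append (hpb.map _)

lemma splits_directSum (ha : a ∈ sepWords i) (hb : b ∈ sepWords j) :
    Splits (· < ·) (directSum a b) :=
  ⟨a, b.map (a.length + ·), (mem_sepWords.1 ha).2.1, by simpa using (mem_sepWords.1 hb).2.1, rfl,
    lt_of_mem_map_length_add ha⟩

/-- Sorting both parts turns the word into `0, …, n - 1`. -/
lemma perm_range_of_append_perm_range (h : a ++ b ~ List.range n)
    (hab : ∀ x ∈ a, ∀ y ∈ b, x < y) :
    a ~ List.range a.length ∧ b ~ (List.range b.length).map (a.length + ·) := by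
  have hn : n = a.length + b.length := by simpa using h.length_eq.symm
  have hsorted : (a.mergeSort ++ b.mergeSort).Pairwise (· ≤ ·) := by
    refine List.pairwise_append.2 ⟨a.sortedLE_mergeSort.pairwise, b.sortedLE_mergeSort.pairwise,
      fun x hx y hy => (hab x (List.mem_mergeSort.1 hx) y (List.mem_mergeSort.1 hy)).le⟩
  have heq : a.mergeSort ++ b.mergeSort = List.range n :=
    (((List.mergeSort_perm a _).append (List.mergeSort_perm b _)).trans h).eq_of_pairwise
      (fun _ _ _ _ => le_antisymm) hsorted List.pairwise_le_range
  rw [hn, List.range_add] at heq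
  obtain ⟨ha, hb⟩ := List.append_inj heq (by simp)
  exact ⟨ha ▸ (List.mergeSort_perm a _).symm, hb ▸ (List.mergeSort_perm b _).symm⟩

lemma exists_directSum_eq (hl : l ∈ sepWords n) (hs : Splits (· < ·) l) :
    ∃ i j a b, i + j = n ∧ a ∈ indecWords i ∧ b ∈ sepWords j ∧ directSum a b = l := by
  obtain ⟨hperm, hne, hsep⟩ := mem_sepWords.1 hl
  obtain ⟨a, b, rfl, ha, hna, hab⟩ := exists_append_not_splits (· < ·) hne
  have hb : b ≠ [] := by
    rintro rfl
    exact hna (by simpa using hs)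
  obtain ⟨hpa, hpb⟩ := perm_range_of_append_perm_range hperm hab
  have hle (y : ℕ) (hy : y ∈ b) : a.length ≤ y := by
    obtain ⟨z, -, rfl⟩ := List.mem_map.1 (hpb.subset hy)
    exact Nat.le_add_right _ z
  refine ⟨a.length, b.length, a, b.map (· - a.length), by simpa using hperm.length_eq,
    mem_indecWords.2 ⟨mem_sepWords.2 ⟨hpa, ha, hsep.sublist (List.sublist_append_left a b)⟩, hna⟩,
    mem_sepWords.2 ⟨?_, by simpa using hb, ?_⟩, ?_⟩
  · simpa [Function.comp_def] using hpb.map (· - a.length)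
  · exact (hsep.sublist (List.sublist_append_right a b)).map fun x hx _ _ h =>
      Nat.sub_lt_sub_right (hle x hx) h
  · simp only [directSum, List.map_map, List.append_cancel_left_eq]
    exact (List.map_congr_left fun y hy => Nat.add_sub_of_le (hle y hy)).trans (List.map_id b)

lemma directSum_inj {a' b' : List ℕ} {i' : ℕ} (ha : a ∈ indecWords i) (ha' : a' ∈ indecWords i')
    (h : directSum a b = directSum a' b') : a = a' ∧ b = b' := by
  obtain ⟨ha, hna⟩ := mem_indecWords.1 ha
  obtain ⟨ha', hna'⟩ := mem_indecWords.1 ha'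
  obtain ⟨rfl, hb⟩ := append_inj_of_not_splits h (mem_sepWords.1 ha).2.1 (mem_sepWords.1 ha').2.1
    hna hna' (lt_of_mem_map_length_add ha) (lt_of_mem_map_length_add ha')
  exact ⟨rfl, List.map_injective_iff.2 (add_right_injective a.length) hb⟩

theorem sum_sepWords_eq_sum_indecWords_add {M : Type*} [AddCommMonoid M] (n : ℕ) (f : List ℕ → M) :
    ∑ l ∈ sepWords n, f l = ∑ l ∈ indecWords n, f l +
      ∑ p ∈ antidiagonal n, ∑ a ∈ indecWords p.1, ∑ b ∈ sepWords p.2, f (directSum a b) := by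
  rw [← Finset.sum_filter_not_add_sum_filter (sepWords n) (Splits (· < ·)) f, ← indecWords]
  congr 1
  simp_rw [← Finset.sum_product', Finset.sum_sigma']
  symm
  refine Finset.sum_nbij (fun x => directSum x.2.1 x.2.2) ?_ ?_ ?_ fun _ _ => rfl
  · rintro ⟨⟨i, j⟩, a, b⟩ h
    simp only [Finset.mem_sigma, HasAntidiagonal.mem_antidiagonal, mem_product] at h
    obtain ⟨rfl, ha, hb⟩ := h
    have ha := (mem_indecWords.1 ha).1
    exact Finset.mem_filter.2 ⟨directSum_mem_sepWords ha hb, splits_directSum ha hb⟩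
  · rintro ⟨⟨i, j⟩, a, b⟩ h ⟨⟨i', j'⟩, a', b'⟩ h' heq
    simp only [mem_coe, Finset.mem_sigma, HasAntidiagonal.mem_antidiagonal, mem_product] at h h'
    obtain ⟨rfl, rfl⟩ := directSum_inj h.2.1 h'.2.1 heq
    obtain rfl := (length_of_mem_sepWords (mem_indecWords.1 h.2.1).1).symm.trans
      (length_of_mem_sepWords (mem_indecWords.1 h'.2.1).1)
    obtain rfl := (length_of_mem_sepWords h.2.2).symm.trans (length_of_mem_sepWords h'.2.2)
    rfl
  · intro l hl
    obtain ⟨hl, hs⟩ := Finset.mem_filter.1 hl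
    obtain ⟨i, j, a, b, hij, ha, hb, rfl⟩ := exists_directSum_eq hl hs
    exact ⟨⟨(i, j), a, b⟩, by simp [hij, ha, hb], rfl⟩

/-- The complement of the word of a permutation of `{0, …, n - 1}`, which replaces every letter `x`
by `n - 1 - x`. -/
def complWord (l : List ℕ) : List ℕ := l.map (l.length - 1 - ·)

lemma strictAntiOn_length_sub (hl : l ∈ sepWords n) :
    StrictAntiOn (l.length - 1 - ·) {x | x ∈ l} := by
  rw [length_of_mem_sepWords hl]
  intro x _ y hy hxy
  have := lt_of_mem_sepWords hl hy
  dsimp only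
  omega

lemma complWord_complWord (hl : l ∈ sepWords n) : complWord (complWord l) = l := by
  simp only [complWord, List.length_map, List.map_map]
  refine (List.map_congr_left fun x hx => ?_).trans (List.map_id l)
  have := lt_of_mem_sepWords hl hx
  rw [length_of_mem_sepWords hl]
  exact Nat.sub_sub_self (by omega)

lemma complWord_mem_sepWords (hl : l ∈ sepWords n) : complWord l ∈ sepWords n := by
  obtain ⟨hperm, hne, hsep⟩ := mem_sepWords.1 hl
  refine mem_sepWords.2 ⟨?_, by simpa [complWord] using hne,
    hsep.map_anti (strictAntiOn_length_sub hl)⟩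
  have hrev : (List.range n).map (n - 1 - ·) = (List.range n).reverse := by
    simp [List.range_eq_range', List.reverse_range']
  rw [complWord, length_of_mem_sepWords hl]
  exact (hperm.map _).trans (hrev ▸ List.reverse_perm _)

lemma splits_lt_complWord_iff (hl : l ∈ sepWords n) :
    Splits (· < ·) (complWord l) ↔ Splits (· > ·) l := by
  constructor
  · intro h
    exact h.of_map.mono fun x hx y hy => ((strictAntiOn_length_sub hl).lt_iff_gt hx hy).1
  · intro h
    rw [← complWord_complWord hl] at h
    exact h.of_map.mono fun x hx y hy =>
      ((strictAntiOn_length_sub (complWord_mem_sepWords hl)).lt_iff_gt hy hx).1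

lemma sum_sepWords_complWord {M : Type*} [AddCommMonoid M] (n : ℕ) (f : List ℕ → M) :
    ∑ l ∈ sepWords n, f (complWord l) = ∑ l ∈ sepWords n, f l :=
  Finset.sum_nbij' complWord complWord (fun _ => complWord_mem_sepWords)
    (fun _ => complWord_mem_sepWords) (fun _ => complWord_complWord)
    (fun _ => complWord_complWord) fun _ _ => rfl

theorem two_nsmul_sum_indecWords {M : Type*} [AddCommMonoid M] (n : ℕ) {f : List ℕ → M}
    (hf : ∀ l ∈ sepWords n, f (complWord l) = f l) :
    2 • ∑ l ∈ indecWords n, f l = ∑ l ∈ sepWords n, f l + if n = 1 then f [0] else 0 := by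
  match n with
  | 0 => simp [indecWords, sepWords_zero]
  | 1 => simp [indecWords_one, sepWords_one, two_nsmul]
  | n + 2 =>
    have hnot (l) (hl : l ∈ sepWords (n + 2)) : ¬ Splits (· < ·) l ↔ Splits (· > ·) l := by
      have hlen : 2 ≤ l.length := by
        rw [length_of_mem_sepWords hl]
        omega
      refine ⟨fun h => ?_, fun h h' => h'.not_splits_gt h⟩
      exact ((mem_sepWords.1 hl).2.2.splits_lt_or_splits_gt (nodup_of_mem_sepWords hl)
        hlen).resolve_left h
    have hcompl : ∑ l ∈ sepWords (n + 2) with ¬ Splits (· < ·) l, f l =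
        ∑ l ∈ sepWords (n + 2) with Splits (· < ·) l, f l := by
      simp only [Finset.sum_filter]
      rw [← sum_sepWords_complWord]
      refine Finset.sum_congr rfl fun l hl => ?_
      have hl' := complWord_mem_sepWords hl
      simp only [hnot _ hl', ← splits_lt_complWord_iff hl', complWord_complWord hl, hf l hl]
    rw [if_neg (by omega), add_zero, two_nsmul, indecWords]
    nth_rw 2 [hcompl]
    exact Finset.sum_filter_not_add_sum_filter ..

end Decomposition

/-! ### Generating functions -/

section GeneratingFunctions

open PowerSeries

variable {R : Type*}

/-- The generating function `∑ₙ ∑_{l ∈ W n} f l Xⁿ` of a statistic `f` over the sets of words `W n`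
of size `n`. -/
def genFun [Semiring R] (W : ℕ → Finset (List ℕ)) (f : List ℕ → R) : PowerSeries R :=
  PowerSeries.mk fun n => ∑ l ∈ W n, f l

section Semiring

variable [Semiring R] {W : ℕ → Finset (List ℕ)} {f : List ℕ → R}

lemma coeff_genFun (n : ℕ) : coeff n (genFun W f) = ∑ l ∈ W n, f l :=
  coeff_mk ..

lemma genFun_sepWords_length_eq_one :
    genFun sepWords (fun l => if l.length = 1 then 1 else 0) = (X : PowerSeries R) := by
  ext n
  have hlen (l) (hl : l ∈ sepWords n) :
      (if l.length = 1 then 1 else 0 : R) = if n = 1 then 1 else 0 := by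
    rw [length_of_mem_sepWords hl]
  rw [coeff_genFun, coeff_X, Finset.sum_congr rfl hlen]
  split_ifs with h
  · subst h
    simp [sepWords_one]
  · exact Finset.sum_const_zero

theorem genFun_sepWords_eq_add_sum (s : List ((List ℕ → R) × (List ℕ → R)))
    (hf : ∀ i j, ∀ a ∈ indecWords i, ∀ b ∈ sepWords j,
      f (directSum a b) = (s.map fun p => p.1 a * p.2 b).sum) :
    genFun sepWords f = genFun indecWords f +
      (s.map fun p => genFun indecWords p.1 * genFun sepWords p.2).sum := by
  have hsum (n : ℕ) : ∑ q ∈ antidiagonal n, ∑ a ∈ indecWords q.1, ∑ b ∈ sepWords q.2,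
      (s.map fun p => p.1 a * p.2 b).sum =
        coeff n (s.map fun p => genFun indecWords p.1 * genFun sepWords p.2).sum := by
    clear hf
    induction s with
    | nil => simp
    | cons p s ih =>
      simp only [List.map_cons, List.sum_cons, Finset.sum_add_distrib, map_add, ih, coeff_mul,
        coeff_genFun, Finset.sum_mul_sum]
  ext n
  rw [map_add, ← hsum, coeff_genFun, coeff_genFun, sum_sepWords_eq_sum_indecWords_add]
  congr 1
  exact Finset.sum_congr rfl fun q _ => Finset.sum_congr rfl fun a ha =>
    Finset.sum_congr rfl fun b hb => hf _ _ a ha b hb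

theorem two_mul_genFun_indecWords (hf : ∀ n, ∀ l ∈ sepWords n, f (complWord l) = f l) :
    2 * genFun indecWords f = genFun sepWords f + C (f [0]) * X := by
  ext n
  rw [two_mul, ← two_nsmul, map_nsmul, map_add, coeff_C_mul, coeff_X, mul_ite, mul_one, mul_zero]
  simpa only [coeff_genFun] using two_nsmul_sum_indecWords n (hf n)

end Semiring

lemma genFun_sepWords_eq_zero {f : List ℕ → ℤ}
    (hf : ∀ n, ∀ l ∈ sepWords n, f (complWord l) = -f l) : genFun sepWords f = 0 := by
  ext n
  have h := sum_sepWords_complWord n f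
  rw [Finset.sum_congr rfl (hf n), Finset.sum_neg_distrib] at h
  rw [coeff_genFun, map_zero]
  omega

lemma corr_complWord {n : ℕ} {l : List ℕ} (hl : l ∈ sepWords n) : corr (complWord l) = corr l :=
  corr_map_anti (nodup_of_mem_sepWords hl) (strictAntiOn_length_sub hl)

lemma genFun_sepWords_firstSpin : genFun sepWords firstSpin = 0 :=
  genFun_sepWords_eq_zero fun _ _ hl =>
    firstSpin_map_anti (nodup_of_mem_sepWords hl) (strictAntiOn_length_sub hl)

lemma genFun_sepWords_lastSpin : genFun sepWords lastSpin = 0 :=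
  genFun_sepWords_eq_zero fun _ _ hl =>
    lastSpin_map_anti (nodup_of_mem_sepWords hl) (strictAntiOn_length_sub hl)

lemma spins_map_add_left (k : ℕ) (l : List ℕ) : spins (l.map (k + ·)) = spins l :=
  spins_map ((add_right_strictMono (a := k)).strictMonoOn _)

lemma lastSpin_directSum {i j : ℕ} {a b : List ℕ} (ha : a ∈ sepWords i) (hb : b ∈ sepWords j) :
    lastSpin (directSum a b) = (if b.length = 1 then 1 else 0) + lastSpin b := by
  have hb' : b.map (a.length + ·) ≠ [] := by simpa using (mem_sepWords.1 hb).2.1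
  rw [directSum, lastSpin_append (mem_sepWords.1 ha).2.1 hb' (lt_of_mem_map_length_add ha),
    List.length_map, lastSpin, spins_map_add_left, lastSpin]

lemma corr_directSum {i j : ℕ} {a b : List ℕ} (ha : a ∈ sepWords i) (hb : b ∈ sepWords j) :
    corr (directSum a b) = corr a + lastSpin a + firstSpin b + corr b := by
  have hb' : b.map (a.length + ·) ≠ [] := by simpa using (mem_sepWords.1 hb).2.1
  rw [directSum, corr_append (mem_sepWords.1 ha).2.1 hb' (lt_of_mem_map_length_add ha),
    firstSpin, corr, corr, spins_map_add_left, firstSpin, corr]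

/-- The generating function of the numbers of separable permutations of positive size. -/
noncomputable def sepSeries : PowerSeries ℤ := genFun sepWords 1

/-- The generating function of the numbers of separable permutations of positive size that are not
direct sums. -/
noncomputable def indecSeries : PowerSeries ℤ := genFun indecWords 1

/-- The generating function of the total correlation `corr` over separable permutations. -/
noncomputable def corrSeries : PowerSeries ℤ := genFun sepWords corr

lemma two_mul_indecSeries : 2 * indecSeries = sepSeries + X := by
  simpa [sepSeries, indecSeries] using
    two_mul_genFun_indecWords (f := (1 : List ℕ → ℤ)) fun _ _ _ => rfl

lemma sepSeries_eq_add_mul : sepSeries = indecSeries + indecSeries * sepSeries := by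
  simpa [sepSeries, indecSeries] using
    genFun_sepWords_eq_add_sum (f := (1 : List ℕ → ℤ)) [(1, 1)] fun i j a _ b _ => by simp

lemma genFun_indecWords_lastSpin : genFun indecWords lastSpin = -(indecSeries * X) := by
  have h := genFun_sepWords_eq_add_sum (f := lastSpin)
    [(1, fun l => if l.length = 1 then 1 else 0), (1, lastSpin)] fun i j a ha b hb => by
      simp [lastSpin_directSum (mem_indecWords.1 ha).1 hb]
  simp only [genFun_sepWords_lastSpin, genFun_sepWords_length_eq_one, List.map_cons, List.map_nil,
    List.sum_cons, List.sum_nil, mul_zero, add_zero] at h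
  exact eq_neg_of_add_eq_zero_left h.symm

lemma two_mul_genFun_indecWords_corr : 2 * genFun indecWords corr = corrSeries := by
  simpa [corrSeries, corr, spins, ascents, adjProdSum] using
    two_mul_genFun_indecWords (f := corr) fun _ _ => corr_complWord

lemma corrSeries_eq_add_add_add :
    corrSeries = genFun indecWords corr + (genFun indecWords corr * sepSeries +
      (genFun indecWords lastSpin * sepSeries + indecSeries * corrSeries)) := by
  simpa [corrSeries, sepSeries, indecSeries, genFun_sepWords_firstSpin] using
    genFun_sepWords_eq_add_sum (f := corr) [(corr, 1), (lastSpin, 1), (1, firstSpin), (1, corr)]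
      fun i j a ha b hb => by simp [corr_directSum (mem_indecWords.1 ha).1 hb, add_assoc]

theorem sepSeries_eq : sepSeries = X + sepSeries ^ 2 + sepSeries * X := by
  linear_combination 2 * sepSeries_eq_add_mul + (1 + sepSeries) * two_mul_indecSeries

lemma corrSeries_mul : corrSeries * (1 - X - 2 * sepSeries) = -(X * (sepSeries - X)) := by
  linear_combination 2 * corrSeries_eq_add_add_add +
    (1 + sepSeries) * two_mul_genFun_indecWords_corr +
    2 * sepSeries * genFun_indecWords_lastSpin +
    (corrSeries - sepSeries * X) * two_mul_indecSeries + X * sepSeries_eq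

lemma derivative_mul_of_eq [CommRing R] {T : PowerSeries R} (hT : T = X + T ^ 2 + T * X) :
    d⁄dX R T * (1 - X - 2 * T) = 1 + T := by
  have h := congr_arg (d⁄dX R) hT
  simp only [map_add, Derivation.leibniz, Derivation.leibniz_pow, derivative_X, smul_eq_mul,
    nsmul_eq_mul] at h
  push_cast at h
  linear_combination h

/-- The right factor is a square root of the discriminant `1 - 6 X + X ^ 2` of the quadratic
equation satisfied by `T`. -/
lemma mul_derivative_of_eq [CommRing R] {T : PowerSeries R} (hT : T = X + T ^ 2 + T * X) :
    (1 - 6 * X + X ^ 2) * d⁄dX R T = 1 + X - 3 * T + T * X := by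
  linear_combination (1 - X - 2 * T) * derivative_mul_of_eq hT + 4 * d⁄dX R T * hT + 2 * hT

lemma coeff_sepSeries {n : ℕ} (hn : n ≠ 0) : coeff n sepSeries = (#(SEP n) : ℤ) := by
  simp [sepSeries, coeff_genFun, sum_sepWords_eq_sum_SEP hn]

lemma constantCoeff_sepSeries : constantCoeff sepSeries = 0 := by
  simp [← coeff_zero_eq_constantCoeff_apply, sepSeries, coeff_genFun, sepWords_zero]

theorem corrSeries_eq : corrSeries = -(X * (X * d⁄dX ℤ sepSeries - sepSeries)) := by
  have hne : 1 - X - 2 * sepSeries ≠ 0 := fun h => by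
    simpa [constantCoeff_sepSeries] using congr_arg constantCoeff h
  refine mul_right_cancel₀ hne ?_
  linear_combination corrSeries_mul + X ^ 2 * derivative_mul_of_eq sepSeries_eq -
    2 * X * sepSeries_eq

theorem sum_SEP_corr (n : ℕ) :
    ∑ σ ∈ SEP (n + 2), corr (word σ) = -(n * #(SEP (n + 1)) : ℤ) := by
  have h := congr_arg (coeff (n + 2)) corrSeries_eq
  rw [corrSeries, coeff_genFun, sum_sepWords_eq_sum_SEP (by omega), map_neg, coeff_succ_X_mul,
    map_sub, coeff_succ_X_mul, coeff_derivative, coeff_sepSeries (by omega)] at h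
  linear_combination h

theorem card_SEP_recurrence (n : ℕ) :
    ((n + 3) * #(SEP (n + 3)) : ℤ) =
      (6 * n + 9) * #(SEP (n + 2)) - n * #(SEP (n + 1)) := by
  have hode : d⁄dX ℤ sepSeries - 6 • (X * d⁄dX ℤ sepSeries) + X * (X * d⁄dX ℤ sepSeries) =
      1 + X - 3 • sepSeries + X * sepSeries := by
    linear_combination mul_derivative_of_eq sepSeries_eq
  have h := congr_arg (coeff (n + 2)) hode
  simp only [map_add, map_sub, map_nsmul, coeff_succ_X_mul, coeff_derivative, coeff_one, coeff_X,
    coeff_sepSeries (Nat.succ_ne_zero _)] at h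
  simp only [Nat.succ_eq_add_one, Nat.cast_add, Nat.cast_ofNat, Nat.cast_one, Int.nsmul_eq_mul,
    Nat.add_eq_zero_iff, OfNat.ofNat_ne_zero, and_false, ↓reduceIte, Nat.reduceEqDiff, add_zero,
    zero_sub] at h
  linear_combination h

lemma card_SEP_one : #(SEP 1) = 1 := by
  have h : coeff 1 sepSeries = 1 := by simp [sepSeries, coeff_genFun, sepWords_one]
  exact_mod_cast (coeff_sepSeries one_ne_zero).symm.trans h

theorem card_SEP_le_card_SEP_succ (n : ℕ) : #(SEP (n + 1)) ≤ #(SEP (n + 2)) := by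
  have h := congr_arg (coeff (n + 2)) sepSeries_eq
  have hsq : 0 ≤ coeff (n + 2) (sepSeries ^ 2) := by
    rw [sq, coeff_mul]
    refine Finset.sum_nonneg fun p _ => mul_nonneg ?_ ?_ <;>
      simp [sepSeries, coeff_genFun]
  rw [map_add, map_add, coeff_succ_mul_X, coeff_X, if_neg (by omega), zero_add,
    coeff_sepSeries (by omega), coeff_sepSeries (by omega)] at h
  zify
  linarith

lemma card_SEP_pos (n : ℕ) : 0 < #(SEP (n + 1)) := by
  induction n with
  | zero => exact card_SEP_one.symm ▸ one_pos
  | succ n ih => exact ih.trans_le (card_SEP_le_card_SEP_succ n)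

end GeneratingFunctions

/-! ### Asymptotics -/

section Limits

open scoped Topology

lemma tendsto_zero_of_le_mul_add {y e : ℕ → ℝ} {r : ℝ} (hr₀ : 0 ≤ r) (hr₁ : r < 1)
    (hy : ∀ n, 0 ≤ y n) (h : ∀ n, y (n + 1) ≤ r * y n + e n) (he : Tendsto e atTop (𝓝 0)) :
    Tendsto y atTop (𝓝 0) := by
  refine tendsto_order.2 ⟨fun a ha => .of_forall fun n => ha.trans_le (hy n), fun ε hε => ?_⟩
  have hpos : 0 < (1 - r) * (ε / 2) := mul_pos (sub_pos.2 hr₁) (half_pos hε)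
  obtain ⟨N, hN⟩ := eventually_atTop.1 (he.eventually_le_const hpos)
  have hgeom (k : ℕ) : y (k + N) ≤ r ^ k * y N + ε / 2 := by
    induction k with
    | zero => simpa using (half_pos hε).le
    | succ k ih =>
      rw [Nat.add_right_comm]
      calc y (k + N + 1) ≤ r * y (k + N) + e (k + N) := h _
        _ ≤ r * (r ^ k * y N + ε / 2) + (1 - r) * (ε / 2) := by
          gcongr
          exact hN _ (Nat.le_add_left N k)
        _ = r ^ (k + 1) * y N + ε / 2 := by ring
  have hlim : Tendsto (fun k => r ^ k * y N) atTop (𝓝 0) := by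
    simpa using (tendsto_pow_atTop_nhds_zero_of_lt_one hr₀ hr₁).mul_const (y N)
  rw [← map_add_atTop_eq_nat N, eventually_map]
  filter_upwards [hlim.eventually_lt_const (half_pos hε)] with k hk
  linarith [hgeom k]

/-- For the constant recurrence with roots `α` and `β` of the characteristic polynomial, one step
multiplies `x - α` by `β / x`, a contraction. -/
lemma tendsto_of_eq_sub_div {𝕜 : Type*} [NormedField 𝕜] {x a b : ℕ → 𝕜} {α β : 𝕜} {c : ℝ}
    (hx : ∀ n, x (n + 1) = a n - b n / x n) (hc : ∀ n, c ≤ ‖x n‖) (hβ : ‖β‖ < c)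
    (ha : Tendsto a atTop (𝓝 (α + β))) (hb : Tendsto b atTop (𝓝 (α * β))) :
    Tendsto x atTop (𝓝 α) := by
  have hc₀ : 0 < c := (norm_nonneg β).trans_lt hβ
  have ha' := tendsto_iff_norm_sub_tendsto_zero.1 ha
  have hb' := (tendsto_iff_norm_sub_tendsto_zero.1 hb).div_const c
  rw [tendsto_iff_norm_sub_tendsto_zero]
  refine tendsto_zero_of_le_mul_add (r := ‖β‖ / c)
    (e := fun n => ‖a n - (α + β)‖ + ‖b n - α * β‖ / c) (by positivity) ((div_lt_one hc₀).2 hβ)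
    (fun n => norm_nonneg _) (fun n => ?_) (by simpa using ha'.add hb')
  have hxn : x n ≠ 0 := norm_pos_iff.1 (hc₀.trans_le (hc n))
  have hstep : x (n + 1) - α =
      β / x n * (x n - α) + ((a n - (α + β)) - (b n - α * β) / x n) := by
    rw [hx]
    field_simp
    ring
  rw [hstep]
  calc _ ≤ ‖β / x n * (x n - α)‖ + (‖a n - (α + β)‖ + ‖(b n - α * β) / x n‖) :=
        (norm_add_le _ _).trans (add_le_add_right (norm_sub_le _ _) _)
    _ ≤ ‖β‖ / c * ‖x n - α‖ + (‖a n - (α + β)‖ + ‖b n - α * β‖ / c) := by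
        rw [norm_mul, norm_div, norm_div]
        gcongr <;> exact hc n

lemma tendsto_card_SEP_succ_div_card_SEP :
    Tendsto (fun n => (#(SEP (n + 2)) : ℝ) / #(SEP (n + 1))) atTop (𝓝 (3 + 2 * √2)) := by
  have hsq : √2 ^ 2 = (2 : ℝ) := sq_sqrt zero_le_two
  have hpos (n : ℕ) : (0 : ℝ) < #(SEP (n + 1)) := by exact_mod_cast card_SEP_pos n
  have hlim (p q : ℝ) : Tendsto (fun n : ℕ => (q + p * n) / (3 + 1 * n)) atTop (𝓝 p) := by
    simpa using tendsto_add_mul_div_add_mul_atTop_nhds q 3 p one_ne_zero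
  refine tendsto_of_eq_sub_div (a := fun n : ℕ => ((9 : ℝ) + 6 * n) / (3 + 1 * n))
    (b := fun n : ℕ => ((0 : ℝ) + 1 * n) / (3 + 1 * n)) (β := 3 - 2 * √2) (c := 1)
    (fun n => ?_) (fun n => ?_) ?_ ?_ ?_
  · have h : ((n + 3) * #(SEP (n + 3)) : ℝ) =
        (6 * n + 9) * #(SEP (n + 2)) - n * #(SEP (n + 1)) := by
      exact_mod_cast card_SEP_recurrence n
    have h2 := (hpos (n + 1)).ne'
    field_simp
    linear_combination h
  · rw [norm_of_nonneg (by positivity), one_le_div (hpos n)]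
    exact_mod_cast card_SEP_le_card_SEP_succ n
  · rw [norm_eq_abs, abs_lt]
    constructor <;> nlinarith [sqrt_nonneg 2]
  · convert hlim 6 9 using 2
    ring
  · convert hlim 1 0 using 2
    linear_combination -4 * hsq

lemma tendsto_card_SEP_div_card_SEP_succ :
    Tendsto (fun n => (#(SEP (n + 1)) : ℝ) / #(SEP (n + 2))) atTop (𝓝 (3 - 2 * √2)) := by
  have hinv : (3 + 2 * √2)⁻¹ = 3 - 2 * √2 :=
    inv_eq_of_mul_eq_one_right (by linear_combination -4 * sq_sqrt zero_le_two)
  simpa only [inv_div, hinv] using tendsto_card_SEP_succ_div_card_SEP.inv₀ (by positivity)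

lemma sepExp_altLen (n : ℕ) :
    sepExp (n + 2) (fun σ => altLen σ) =
      2 + n / 2 * (1 + (#(SEP (n + 1)) : ℝ) / #(SEP (n + 2))) := by
  have hpos : (0 : ℝ) < #(SEP (n + 2)) := by exact_mod_cast card_SEP_pos (n + 1)
  have hsum : 2 * ∑ σ ∈ SEP (n + 2), (altLen σ : ℤ) + ∑ σ ∈ SEP (n + 2), corr (word σ) =
      #(SEP (n + 2)) * (n + 4) := by
    rw [Finset.mul_sum, ← Finset.sum_add_distrib, ← nsmul_eq_mul, ← Finset.sum_const]
    refine Finset.sum_congr rfl fun σ _ => ?_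
    rw [two_mul_altLen_add_corr (Nat.le_add_left 2 n)]
    push_cast
    ring
  rw [sum_SEP_corr] at hsum
  have hsum' : 2 * ∑ σ ∈ SEP (n + 2), (altLen σ : ℝ) + -(n * #(SEP (n + 1))) =
      #(SEP (n + 2)) * (n + 4) := by exact_mod_cast hsum
  rw [sepExp]
  field_simp
  linear_combination hsum'

end Limits

/-- The expected length of the longest alternating subsequence of a uniformly random
separable permutation of `[n]` is asymptotic to `(2 - √2) n`. -/
theorem mean_altLen_asymp :
    Tendsto (fun n : ℕ => sepExp n (fun σ => (altLen σ : ℝ)) / n) atTop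
      (nhds (2 - Real.sqrt 2)) := by
  rw [← tendsto_add_atTop_iff_nat 2]
  have hlin : Tendsto (fun n : ℕ => ((0 : ℝ) + 1 / 2 * n) / (2 + 1 * n)) atTop (nhds (1 / 2)) := by
    simpa using tendsto_add_mul_div_add_mul_atTop_nhds (0 : ℝ) 2 (1 / 2) one_ne_zero
  have hconst : Tendsto (fun n : ℕ => (2 : ℝ) / (2 + 1 * n)) atTop (nhds 0) := by
    simpa using tendsto_add_mul_div_add_mul_atTop_nhds (2 : ℝ) 2 0 one_ne_zero
  convert hconst.add (hlin.mul (tendsto_card_SEP_div_card_SEP_succ.const_add 1)) using 2 with n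
  · rw [sepExp_altLen]
    push_cast
    ring
  · ring
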